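/- arXiv:2306.05154 — 2 statements merged into one kernel-verified Lean document; each statement's English description precedes it below -/
import Mathlib

section
/- Let f be a maximally sparse signomial on ℝⁿ_{>0}, i.e. every exponent vector in the support σ(f) is a vertex of the Newton polytope N(f). Then Trop(S(f)) = N_f^-, where S(f) = f^{-1}(ℝ_{<0}). -/
/-- A signomial on the positive orthant `ℝⁿ_{>0}`: a function
`x ↦ ∑_{μ ∈ supp} coeff μ * x ^ μ` with finite support and nonzero coefficients. -/
structure Signomial (n : ℕ) where
  supp : Finset (Fin n → ℝ)
  coeff : (Fin n → ℝ) → ℝ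
  coeff_ne_zero : ∀ μ ∈ supp, coeff μ ≠ 0
  coeff_eq_zero : ∀ μ ∉ supp, coeff μ = 0

namespace Signomial

variable {n : ℕ}

/-- The monomial `x^μ = ∏ i, x i ^ μ i` (real exponents). -/
noncomputable def mono (x μ : Fin n → ℝ) : ℝ := ∏ i, x i ^ μ i

/-- Evaluation of a signomial. -/
noncomputable def eval (f : Signomial n) (x : Fin n → ℝ) : ℝ :=
  ∑ μ ∈ f.supp, f.coeff μ * mono x μ

open Classical in
/-- Evaluation of the restriction `f_{|S}` of `f` to a set `S ⊆ ℝⁿ`. -/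
noncomputable def evalOn (f : Signomial n) (S : Set (Fin n → ℝ)) (x : Fin n → ℝ) : ℝ :=
  ∑ μ ∈ f.supp, if μ ∈ S then f.coeff μ * mono x μ else 0

/-- The Newton polytope `N(f) = conv(σ(f))`. -/
def newton (f : Signomial n) : Set (Fin n → ℝ) :=
  convexHull ℝ (f.supp : Set (Fin n → ℝ))

/-- Euclidean scalar product on `Fin n → ℝ`. -/
noncomputable def dot (v μ : Fin n → ℝ) : ℝ := ∑ i, v i * μ i

/-- The face `N(f)_v` of the Newton polytope cut out by `v`. -/
def faceAt (f : Signomial n) (v : Fin n → ℝ) : Set (Fin n → ℝ) :=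
  {μ ∈ f.newton | ∀ ν ∈ f.newton, dot v ν ≤ dot v μ}

/-- `F` is a (nonempty, exposed) face of the Newton polytope of `f`. -/
def IsFace (f : Signomial n) (F : Set (Fin n → ℝ)) : Prop :=
  F.Nonempty ∧ ∃ v, F = f.faceAt v

/-- The (outer) normal cone of a face `F` of `N(f)`. -/
def normalCone (f : Signomial n) (F : Set (Fin n → ℝ)) : Set (Fin n → ℝ) :=
  {v | F ⊆ f.faceAt v}

/-- The negative normal cone `N_f^- = {v | N(f)_v ∩ σ₋(f) ≠ ∅}`. -/
def negCone (f : Signomial n) : Set (Fin n → ℝ) :=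
  {v | ∃ μ ∈ f.supp, f.coeff μ < 0 ∧ μ ∈ f.faceAt v}

/-- The positive orthant `ℝⁿ_{>0}`. -/
def posOrth (n : ℕ) : Set (Fin n → ℝ) := {x | ∀ i, 0 < x i}

/-- `S(f) = f⁻¹(ℝ_{<0})` (inside the positive orthant). -/
def negSet₁ (f : Signomial n) : Set (Fin n → ℝ) :=
  {x ∈ posOrth n | f.eval x < 0}

/-- `S(f₁, …, f_k) = ⋂ᵢ fᵢ⁻¹(ℝ_{<0})` (inside the positive orthant). -/
def negSet {k : ℕ} (f : Fin k → Signomial n) : Set (Fin n → ℝ) :=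
  {x ∈ posOrth n | ∀ i, (f i).eval x < 0}

/-- The actual negative normal cone `Σ(f)` of a single signomial. -/
def actualNegCone₁ (f : Signomial n) : Set (Fin n → ℝ) :=
  {v | ∃ x ∈ posOrth n, f.evalOn (f.faceAt v) x < 0}

/-- The actual negative normal cone `Σ(f₁, …, f_k)`. -/
def actualNegCone {k : ℕ} (f : Fin k → Signomial n) : Set (Fin n → ℝ) :=
  {v | ∃ x ∈ posOrth n, ∀ i, (f i).evalOn ((f i).faceAt v) x < 0}

/-- The real tropicalization (logarithmic limit set) of `S ⊆ ℝⁿ_{>0}`: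
`w ∈ Trop(S)` iff there are sequences `x(m) ∈ S`, `t(m) ∈ (1,∞)` with `t(m) → ∞` and
`Log_{t(m)}(x(m)) → w`. -/
def trop (S : Set (Fin n → ℝ)) : Set (Fin n → ℝ) :=
  {w | ∃ (x : ℕ → Fin n → ℝ) (t : ℕ → ℝ),
    (∀ m, x m ∈ S) ∧ (∀ m, 1 < t m) ∧
    Filter.Tendsto t Filter.atTop Filter.atTop ∧
    Filter.Tendsto (fun m i => Real.log (x m i) / Real.log (t m))
      Filter.atTop (nhds w)}

open Classical in
/-- The support of the restriction `f_{|F}`, i.e. `σ(f) ∩ F`. -/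
noncomputable def restSupp (f : Signomial n) (F : Set (Fin n → ℝ)) : Finset (Fin n → ℝ) :=
  f.supp.filter (fun μ => μ ∈ F)

/-- Evaluation of the signomial with coefficient vector `c ∈ ℝ^A`. -/
noncomputable def evalVec (A : Finset (Fin n → ℝ)) (c : A → ℝ) (x : Fin n → ℝ) : ℝ :=
  ∑ μ : A, c μ * mono x (μ : Fin n → ℝ)

/-- The nonnegativity cone `P⁺_A ⊆ ℝ^A`. -/
def nonnegConeSet (A : Finset (Fin n → ℝ)) : Set (A → ℝ) :=
  {c | ∀ x ∈ posOrth n, 0 ≤ evalVec A c x}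

/-- The coefficient vector of `f` viewed in `ℝ^A`. -/
def coeffVec (f : Signomial n) (A : Finset (Fin n → ℝ)) : A → ℝ :=
  fun μ => f.coeff μ

/-- The non-boundary condition (NB): for every face `F` of `N(f)`, if `f_{|F}` is
nonnegative on the positive orthant then it lies in the interior of the nonnegativity
cone `P⁺_{σ(f) ∩ F}`. -/
def NBcond (f : Signomial n) : Prop :=
  ∀ F : Set (Fin n → ℝ), f.IsFace F →
    coeffVec f (f.restSupp F) ∈ nonnegConeSet (f.restSupp F) →
    coeffVec f (f.restSupp F) ∈ interior (nonnegConeSet (f.restSupp F))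

end Signomial

/-!
Put `x = exp y`, so that `f(x) = ∑ c_ν exp(y·ν)` is an exponential sum, whose sign is that of the
coefficient of a term dominating all the others.

If `y / L → w` with `L → ∞`, then the exponents `ν` with `w·ν` maximal dominate all those with
smaller `w·ν`. When `w ∉ N_f^-` no negative term is among the maximal ones, so a single maximal
positive term beats all the negative terms together, and `f(x) > 0` in the limit.

Conversely, let `μ` be a negative exponent on the face `N(f)_v`. The ray `s ↦ s² v` alone does not
single out `μ` among the exponents of that face; if `μ` is a vertex, cut out by `u`, then the
perturbed curve `s ↦ s² v + s u` does, while having the same tropical limit `v`.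
-/

open Filter Topology Asymptotics

theorem isEquivalent_sum_mul_exp {ι α : Type*} {l : Filter α} {s : Finset ι} {c : ι → ℝ}
    {e : ι → α → ℝ} {i : ι} (hi : i ∈ s) (hc : c i ≠ 0)
    (he : ∀ j ∈ s, j ≠ i → Tendsto (fun a ↦ e i a - e j a) l atTop) :
    (fun a ↦ ∑ j ∈ s, c j * Real.exp (e j a)) ~[l] fun a ↦ c i * Real.exp (e i a) := by
  classical
  have hsmall : (fun a ↦ ∑ j ∈ s.erase i, c j * Real.exp (e j a)) =o[l]
      fun a ↦ c i * Real.exp (e i a) := by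
    refine IsLittleO.fun_sum fun j hj ↦ ?_
    obtain ⟨hji, hjs⟩ := Finset.mem_erase.1 hj
    exact ((Real.isLittleO_exp_comp_exp_comp.2 (he j hjs hji)).const_mul_left _).const_mul_right hc
  refine (IsEquivalent.refl.add_isLittleO hsmall).congr_left (.of_eq (funext fun a ↦ ?_))
  exact Finset.add_sum_erase s (fun j ↦ c j * Real.exp (e j a)) hi

theorem tendsto_inv_sq_smul_sq_smul_add_smul {E : Type*} [AddCommGroup E] [Module ℝ E]
    [TopologicalSpace E] [ContinuousAdd E] [ContinuousSMul ℝ E] (v u : E) :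
    Tendsto (fun s : ℝ ↦ (s ^ 2)⁻¹ • (s ^ 2 • v + s • u)) atTop (𝓝 v) := by
  have hlim : Tendsto (fun s : ℝ ↦ v + s⁻¹ • u) atTop (𝓝 v) := by
    simpa using ((tendsto_inv_atTop_zero (𝕜 := ℝ)).smul_const u).const_add v
  refine hlim.congr' ?_
  filter_upwards [eventually_ne_atTop 0] with s hs
  match_scalars <;> field_simp

namespace Signomial

variable {n : ℕ} {f : Signomial n} {u v w μ ν : Fin n → ℝ}

theorem dot_eq_dotProduct (v μ : Fin n → ℝ) : dot v μ = v ⬝ᵥ μ := rfl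

theorem mono_exp (y μ : Fin n → ℝ) : mono (Real.exp ∘ y) μ = Real.exp (dot y μ) := by
  simp only [mono, dot, Real.exp_sum, Real.exp_mul, Function.comp_apply]

theorem eval_exp (f : Signomial n) (y : Fin n → ℝ) :
    f.eval (Real.exp ∘ y) = ∑ ν ∈ f.supp, f.coeff ν * Real.exp (dot y ν) := by
  simp only [eval, mono_exp]

theorem exp_comp_mem_negSet₁_iff {y : Fin n → ℝ} :
    Real.exp ∘ y ∈ negSet₁ f ↔ f.eval (Real.exp ∘ y) < 0 :=
  and_iff_right fun i ↦ Real.exp_pos (y i)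

theorem exp_comp_log {x : Fin n → ℝ} (hx : x ∈ posOrth n) : Real.exp ∘ Real.log ∘ x = x :=
  funext fun i ↦ Real.exp_log (hx i)

theorem supp_nonempty_of_eval_ne_zero {x : Fin n → ℝ} (hx : f.eval x ≠ 0) : f.supp.Nonempty :=
  Finset.nonempty_of_sum_ne_zero hx

theorem supp_subset_newton (f : Signomial n) : (f.supp : Set (Fin n → ℝ)) ⊆ f.newton :=
  subset_convexHull ℝ _

theorem mem_faceAt_iff (hμ : μ ∈ f.supp) :
    μ ∈ f.faceAt v ↔ ∀ ν ∈ f.supp, dot v ν ≤ dot v μ := by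
  refine ⟨fun h ν hν ↦ h.2 ν (f.supp_subset_newton hν), fun h ↦ ⟨f.supp_subset_newton hμ, ?_⟩⟩
  have hconv : Convex ℝ {ν | dot v ν ≤ dot v μ} :=
    convex_halfSpace_le (dotProductBilin ℝ ℝ v).isLinear _
  exact fun ν hν ↦ convexHull_min h hconv hν

theorem exists_mem_supp_mem_faceAt (hf : f.supp.Nonempty) (v : Fin n → ℝ) :
    ∃ μ ∈ f.supp, μ ∈ f.faceAt v := by
  obtain ⟨μ, hμ, hmax⟩ := f.supp.exists_max_image (dot v) hf
  exact ⟨μ, hμ, (mem_faceAt_iff hμ).2 hmax⟩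

theorem dot_lt_dot_of_mem_faceAt (hμ : μ ∈ f.faceAt v) (hν : ν ∈ f.newton)
    (hν' : ν ∉ f.faceAt v) : dot v ν < dot v μ := by
  by_contra! hle
  exact hν' ⟨hν, fun κ hκ ↦ (hμ.2 κ hκ).trans hle⟩

theorem coeff_pos_of_notMem_negCone (hw : w ∉ f.negCone) (hμ : μ ∈ f.supp)
    (hμw : μ ∈ f.faceAt w) : 0 < f.coeff μ :=
  (f.coeff_ne_zero μ hμ).lt_or_gt.resolve_left fun hc ↦ hw ⟨μ, hμ, hc, hμw⟩

section Trop

variable {α : Type*} {l : Filter α} {y : α → Fin n → ℝ} {L : α → ℝ}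

theorem mem_trop_of_frequently [l.IsCountablyGenerated] {S : Set (Fin n → ℝ)}
    (hL : Tendsto L l atTop) (hy : Tendsto (fun a ↦ (L a)⁻¹ • y a) l (𝓝 w))
    (hS : ∃ᶠ a in l, Real.exp ∘ y a ∈ S) : w ∈ trop S := by
  obtain ⟨a, ha, hSL⟩ :=
    exists_seq_forall_of_frequently (hS.and_eventually (hL.eventually_gt_atTop 0))
  refine ⟨fun m ↦ Real.exp ∘ y (a m), fun m ↦ Real.exp (L (a m)), fun m ↦ (hSL m).1,
    fun m ↦ Real.one_lt_exp_iff.2 (hSL m).2, Real.tendsto_exp_atTop.comp (hL.comp ha),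
    (hy.comp ha).congr fun m ↦ ?_⟩
  ext i
  simp [div_eq_inv_mul]

theorem exists_tendsto_of_mem_trop {S : Set (Fin n → ℝ)} (hS : S ⊆ posOrth n) (hw : w ∈ trop S) :
    ∃ (y : ℕ → Fin n → ℝ) (L : ℕ → ℝ), (∀ m, Real.exp ∘ y m ∈ S) ∧ Tendsto L atTop atTop ∧
      Tendsto (fun m ↦ (L m)⁻¹ • y m) atTop (𝓝 w) := by
  obtain ⟨x, t, hx, -, ht, hlim⟩ := hw
  refine ⟨fun m ↦ Real.log ∘ x m, fun m ↦ Real.log (t m), fun m ↦ ?_,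
    Real.tendsto_log_atTop.comp ht, hlim.congr fun m ↦ ?_⟩
  · rw [exp_comp_log (hS (hx m))]
    exact hx m
  · ext i
    simp [div_eq_inv_mul]

theorem tendsto_dot_sub_dot_atTop (hL : Tendsto L l atTop)
    (hy : Tendsto (fun a ↦ (L a)⁻¹ • y a) l (𝓝 w)) (h : dot w ν < dot w μ) :
    Tendsto (fun a ↦ dot (y a) μ - dot (y a) ν) l atTop := by
  simp only [dot_eq_dotProduct, ← dotProduct_sub] at h ⊢
  have hpos : 0 < w ⬝ᵥ (μ - ν) := by rwa [dotProduct_sub, sub_pos]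
  have hdot : Tendsto (fun a ↦ ((L a)⁻¹ • y a) ⬝ᵥ (μ - ν)) l (𝓝 (w ⬝ᵥ (μ - ν))) :=
    ((continuous_id.dotProduct continuous_const).tendsto w).comp hy
  refine (hL.atTop_mul_pos hpos hdot).congr' ?_
  filter_upwards [hL.eventually_ne_atTop 0] with a ha
  rw [smul_dotProduct, smul_eq_mul, mul_inv_cancel_left₀ ha]

theorem eventually_eval_exp_pos_of_notMem_negCone (hf : f.supp.Nonempty) (hw : w ∉ f.negCone)
    (hL : Tendsto L l atTop) (hy : Tendsto (fun a ↦ (L a)⁻¹ • y a) l (𝓝 w)) :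
    ∀ᶠ a in l, 0 < f.eval (Real.exp ∘ y a) := by
  classical
  obtain ⟨μ, hμ, hμw⟩ := exists_mem_supp_mem_faceAt hf w
  have hcμ : 0 < f.coeff μ := coeff_pos_of_notMem_negCone hw hμ hμw
  let s : Finset (Fin n → ℝ) := insert μ {ν ∈ f.supp | f.coeff ν < 0}
  have hs_supp : s ⊆ f.supp := Finset.insert_subset hμ (Finset.filter_subset _ _)
  have hgap : ∀ ν ∈ s, ν ≠ μ → Tendsto (fun a ↦ dot (y a) μ - dot (y a) ν) l atTop := by
    intro ν hν hνμ
    obtain ⟨hν, hcν⟩ := Finset.mem_filter.1 (Finset.mem_of_mem_insert_of_ne hν hνμ)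
    have hνw : ν ∉ f.faceAt w := fun h ↦ hw ⟨ν, hν, hcν, h⟩
    exact tendsto_dot_sub_dot_atTop hL hy
      (dot_lt_dot_of_mem_faceAt hμw (f.supp_subset_newton hν) hνw)
  have hdom : (fun a ↦ ∑ ν ∈ s, f.coeff ν * Real.exp (dot (y a) ν)) ~[l]
      fun a ↦ f.coeff μ * Real.exp (dot (y a) μ) :=
    isEquivalent_sum_mul_exp (Finset.mem_insert_self _ _) hcμ.ne' hgap
  filter_upwards [hdom.eventually_pos (.of_forall fun a ↦ by positivity)] with a ha
  rw [eval_exp]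
  refine ha.trans_le (Finset.sum_le_sum_of_subset_of_nonneg hs_supp fun ν hν hνs ↦ ?_)
  have hcν : 0 ≤ f.coeff ν := by
    by_contra! hcν
    exact hνs (Finset.mem_insert_of_mem (Finset.mem_filter.2 ⟨hν, hcν⟩))
  positivity

end Trop

theorem trop_negSet₁_subset_negCone (f : Signomial n) : trop (negSet₁ f) ⊆ f.negCone := by
  intro w hw
  obtain ⟨y, L, hneg, hL, hy⟩ := exists_tendsto_of_mem_trop (fun x hx ↦ hx.1) hw
  by_contra hw'
  have hf : f.supp.Nonempty := supp_nonempty_of_eval_ne_zero (hneg 0).2.ne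
  obtain ⟨m, hm⟩ := (eventually_eval_exp_pos_of_notMem_negCone hf hw' hL hy).exists
  exact (hneg m).2.not_gt hm

theorem tendsto_dot_sq_smul_add_smul_sub_atTop (hv : dot v ν ≤ dot v μ) (hu : dot u ν < dot u μ) :
    Tendsto (fun s : ℝ ↦ dot (s ^ 2 • v + s • u) μ - dot (s ^ 2 • v + s • u) ν) atTop atTop := by
  refine tendsto_atTop_mono (fun s ↦ ?_) (tendsto_id.atTop_mul_const (sub_pos.2 hu))
  simp only [dot_eq_dotProduct, add_dotProduct, smul_dotProduct, smul_eq_mul, id] at hv ⊢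
  linarith [mul_le_mul_of_nonneg_left hv (sq_nonneg s)]

theorem eventually_eval_exp_neg_of_faceAt_eq_singleton (hμ : μ ∈ f.supp) (hc : f.coeff μ < 0)
    (hμv : μ ∈ f.faceAt v) (hu : f.faceAt u = {μ}) :
    ∀ᶠ s : ℝ in atTop, f.eval (Real.exp ∘ (s ^ 2 • v + s • u)) < 0 := by
  have hμu : μ ∈ f.faceAt u := hu ▸ Set.mem_singleton μ
  have hdom : (fun s : ℝ ↦ f.eval (Real.exp ∘ (s ^ 2 • v + s • u))) ~[atTop]
      fun s ↦ f.coeff μ * Real.exp (dot (s ^ 2 • v + s • u) μ) := by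
    simp only [eval_exp]
    refine isEquivalent_sum_mul_exp hμ hc.ne fun ν hν hνμ ↦ ?_
    have hνu : ν ∉ f.faceAt u := hu ▸ hνμ
    exact tendsto_dot_sq_smul_add_smul_sub_atTop ((mem_faceAt_iff hμ).1 hμv ν hν)
      (dot_lt_dot_of_mem_faceAt hμu (f.supp_subset_newton hν) hνu)
  exact hdom.eventually_neg (.of_forall fun s ↦ mul_neg_of_neg_of_pos hc (Real.exp_pos _))

theorem mem_trop_negSet₁_of_faceAt_eq_singleton (hμ : μ ∈ f.supp) (hc : f.coeff μ < 0)
    (hμv : μ ∈ f.faceAt v) (hu : f.faceAt u = {μ}) : v ∈ trop (negSet₁ f) :=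
  have hneg : ∀ᶠ s : ℝ in atTop, Real.exp ∘ (s ^ 2 • v + s • u) ∈ negSet₁ f :=
    (eventually_eval_exp_neg_of_faceAt_eq_singleton hμ hc hμv hu).mono
      fun _ ↦ exp_comp_mem_negSet₁_iff.2
  mem_trop_of_frequently (tendsto_pow_atTop two_ne_zero)
    (tendsto_inv_sq_smul_sq_smul_add_smul v u) hneg.frequently

end Signomial

open Signomial in
theorem trop_eq_negCone_of_maxSparse_general {n : ℕ} (f : Signomial n)
    (hvert : ∀ μ ∈ f.supp, f.coeff μ < 0 → ∃ v : Fin n → ℝ, f.faceAt v = {μ}) :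
    trop (negSet₁ f) = negCone f := by
  refine (trop_negSet₁_subset_negCone f).antisymm ?_
  rintro v ⟨μ, hμ, hc, hμv⟩
  obtain ⟨u, hu⟩ := hvert μ hμ hc
  exact mem_trop_negSet₁_of_faceAt_eq_singleton hμ hc hμv hu

open Signomial in
/-- For a maximally sparse signomial `f` (every exponent vector of `f` is
a vertex of `N(f)`), the real tropicalization of `S(f) = f⁻¹(ℝ_{<0})` equals the
negative normal cone `N_f^-`. -/
theorem trop_eq_negCone_of_maxSparse {n : ℕ} (f : Signomial n)
    (hms : ∀ μ ∈ f.supp, ∃ v : Fin n → ℝ, f.faceAt v = {μ}) :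
    trop (negSet₁ f) = negCone f :=
  trop_eq_negCone_of_maxSparse_general f fun μ hμ _ ↦ hms μ hμ
end

section
/- Let f be a maximally sparse signomial on ℝⁿ_{>0}, i.e. every exponent vector in the support σ(f) is a vertex of the Newton polytope N(f). Then the negative normal cone N_f^- is regular, i.e. N_f^- equals the closure of its interior. -/
/-!
`N_f^-` is the finite union of the normal cones `{v | μ ∈ N(f)_v}` over the negative exponent
vectors `μ`. Each of them is closed and convex. If `w` exposes `μ` as a vertex, then
`w·ν < w·μ` for the finitely many other `ν ∈ σ(f)`, and these inequalities survive small
perturbations of `w`; so the cone has nonempty interior and, being convex, is the closure of it.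
Regularity passes to finite unions.
-/

section FiniteUnion

open Set

variable {X ι : Type*} [TopologicalSpace X]

theorem closure_interior_biUnion_of_finite {I : Set ι} (hI : I.Finite) {C : ι → Set X}
    (hC : ∀ i ∈ I, closure (interior (C i)) = C i) :
    closure (interior (⋃ i ∈ I, C i)) = ⋃ i ∈ I, C i := by
  apply Subset.antisymm
  · have hclosed : IsClosed (⋃ i ∈ I, C i) :=
      hI.isClosed_biUnion fun i hi => hC i hi ▸ isClosed_closure
    exact closure_minimal interior_subset hclosed
  · refine iUnion₂_subset fun i hi => ?_
    calc
      C i = closure (interior (C i)) := (hC i hi).symm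
      _ ⊆ closure (interior (⋃ i ∈ I, C i)) :=
        closure_mono (interior_mono (subset_biUnion_of_mem hi))

end FiniteUnion

namespace Signomial

variable {n : ℕ}

theorem isLinearMap_dot_right (v : Fin n → ℝ) : IsLinearMap ℝ (dot v) :=
  (dotProductBilin ℝ ℝ v).isLinear

theorem convex_setOf_dot_le_dot (ν μ : Fin n → ℝ) : Convex ℝ {v | dot v ν ≤ dot v μ} := by
  have hlin : IsLinearMap ℝ fun v => dot v ν - dot v μ :=
    ((dotProductBilin ℝ ℝ).flip ν - (dotProductBilin ℝ ℝ).flip μ).isLinear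
  simpa only [sub_nonpos] using convex_halfSpace_le hlin 0

theorem continuous_dot_left (μ : Fin n → ℝ) : Continuous fun v => dot v μ := by
  unfold dot
  fun_prop

/-- `μ` is a vertex of `N(f)`, i.e. `{μ}` is a face; such a `μ` automatically lies in `N(f)`. -/
def IsVertex (f : Signomial n) (μ : Fin n → ℝ) : Prop :=
  ∃ v, f.faceAt v = {μ}

/-- The set `σ₋(f)` of negative exponent vectors, which indexes the normal cones making up
`N_f^-`. -/
def negSupp (f : Signomial n) : Set (Fin n → ℝ) :=
  {μ | μ ∈ f.supp ∧ f.coeff μ < 0}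

variable {f : Signomial n} {v w μ ν : Fin n → ℝ}

theorem finite_negSupp (f : Signomial n) : f.negSupp.Finite :=
  f.supp.finite_toSet.subset fun _ hμ => hμ.1

theorem negCone_eq_biUnion_normalCone (f : Signomial n) :
    f.negCone = ⋃ μ ∈ f.negSupp, f.normalCone {μ} := by
  ext v
  simp only [negCone, negSupp, normalCone, Set.mem_ofPred_eq, Set.mem_iUnion,
    Set.singleton_subset_iff, exists_prop, and_assoc]

theorem convex_normalCone (f : Signomial n) (F : Set (Fin n → ℝ)) :
    Convex ℝ (f.normalCone F) :=
  fun _ hu _ hv _ _ ha hb hab μ hμ =>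
    ⟨(hu hμ).1, fun ν hν =>
      convex_setOf_dot_le_dot ν μ ((hu hμ).2 ν hν) ((hv hμ).2 ν hν) ha hb hab⟩

theorem isClosed_normalCone (f : Signomial n) (F : Set (Fin n → ℝ)) :
    IsClosed (f.normalCone F) := by
  change IsClosed {v | ∀ μ ∈ F, μ ∈ f.newton ∧ ∀ ν ∈ f.newton, dot v ν ≤ dot v μ}
  simp only [Set.ofPred_forall, Set.ofPred_and]
  exact isClosed_biInter fun μ _ => isClosed_const.inter <| isClosed_biInter fun ν _ =>
    isClosed_le (continuous_dot_left ν) (continuous_dot_left μ)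

theorem dot_le_of_mem_newton {c : ℝ} (hsupp : ∀ ρ ∈ f.supp, dot v ρ ≤ c)
    (hν : ν ∈ f.newton) : dot v ν ≤ c :=
  convexHull_min hsupp (convex_halfSpace_le (isLinearMap_dot_right v) c) hν

theorem dot_lt_dot_of_faceAt_eq_singleton (hw : f.faceAt w = {μ}) (hν : ν ∈ f.newton)
    (hne : ν ≠ μ) : dot w ν < dot w μ := by
  have hμ : μ ∈ f.faceAt w := hw ▸ Set.mem_singleton μ
  by_contra! hle
  have hνface : ν ∈ f.faceAt w := ⟨hν, fun ρ hρ => (hμ.2 ρ hρ).trans hle⟩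
  rw [hw] at hνface
  exact hne hνface

theorem mem_interior_normalCone_of_faceAt_eq_singleton (hw : f.faceAt w = {μ}) :
    w ∈ interior (f.normalCone {μ}) := by
  have hμ : μ ∈ f.newton := (hw ▸ Set.mem_singleton μ : μ ∈ f.faceAt w).1
  have hnear : ∀ᶠ u in nhds w, ∀ ν ∈ f.supp, dot u ν ≤ dot u μ := by
    refine (Filter.eventually_all_finset f.supp).2 fun ν hν => ?_
    rcases eq_or_ne ν μ with rfl | hne
    · exact .of_forall fun _ => le_rfl
    · have hlt := dot_lt_dot_of_faceAt_eq_singleton hw (subset_convexHull ℝ _ hν) hne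
      exact ((continuous_dot_left ν).continuousAt.eventually_lt
        (continuous_dot_left μ).continuousAt hlt).mono fun _ => le_of_lt
  refine mem_interior_iff_mem_nhds.2 (hnear.mono fun u hu => ?_)
  exact Set.singleton_subset_iff.2 ⟨hμ, fun _ => dot_le_of_mem_newton hu⟩

theorem IsVertex.closure_interior_normalCone (hμ : f.IsVertex μ) :
    closure (interior (f.normalCone {μ})) = f.normalCone {μ} := by
  obtain ⟨w, hw⟩ := hμ
  rw [(convex_normalCone f {μ}).closure_interior_eq_closure_of_nonempty_interior
    ⟨w, mem_interior_normalCone_of_faceAt_eq_singleton hw⟩, (isClosed_normalCone f {μ}).closure_eq]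

end Signomial

open Signomial in
theorem negCone_regular_of_maxSparse_general {n : ℕ} (f : Signomial n)
    (hvertex : ∀ μ ∈ f.negSupp, f.IsVertex μ) :
    negCone f = closure (interior (negCone f)) := by
  rw [negCone_eq_biUnion_normalCone]
  exact (closure_interior_biUnion_of_finite f.finite_negSupp fun μ hμ =>
    (hvertex μ hμ).closure_interior_normalCone).symm

open Signomial in
/-- For a maximally sparse signomial `f` (every exponent vector of `f` is
a vertex of `N(f)`), the negative normal cone `N_f^-` is regular: it equals the closure
of its interior. -/
theorem negCone_regular_of_maxSparse {n : ℕ} (f : Signomial n)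
    (hms : ∀ μ ∈ f.supp, ∃ v : Fin n → ℝ, f.faceAt v = {μ}) :
    negCone f = closure (interior (negCone f)) :=
  negCone_regular_of_maxSparse_general f fun μ hμ => hms μ hμ.1
end
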